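/- For all integers d ≥ 1, m ≥ 1, and r ≥ 2, there exists an integer N = N(d,m,r) such that every sequence of N points in ℝ^d in general position contains a subsequence of length m whose minimal Tverberg partitions into r parts are exactly its d-colorful partitions into r parts. -/

import Mathlib

/-!
A sufficiently long sequence in general position contains a subsequence that looks like a rapidly
growing moment curve, and for such a subsequence both directions are size estimates.

**Universality** (`vector_universality`). Points are lifted to height one in `ℝ^(d+1)`, so that
general position says that all maximal minors are nonzero. Ramsey's theorem makes all minors have
one sign. A second application, to `(d+3)`-tuples, makes it uniform whether certain cross-ratios of
minors exceed a given constant `C > 1`. By the three-term Plücker relation (`plucker`) these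
cross-ratios cannot all be at most `C` on a long sequence (`cross_bound`), so they all exceed `C`.
Fixing the first `j` and the last `d - j` rows of a minor gives linear functionals `F 0, …, F d`
that are positive on the remaining points, and such that the ratio `F (j+1) / F j` grows by a
factor of more than `C` from each point to any later one.

**Colourful systems** (`ColSys`). A collection `T` has a colourful word iff there are points
`X i j ∈ T i` for `j ≤ d` which exhaust `T i`, where the blocks `{X i j : i}` follow each other in
order and consecutive blocks share exactly their common endpoint
(`IsColorfulWord.exists_colSys`, `ColSys.isColorfulWord`).

**A Tverberg partition contains a colourful one** (`TvPt.exists_colSys`). Write the common point as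
a convex combination of each part and apply `F j`. If `X i j` is the point of `T i` contributing
the largest term, then `X i j ≤ X i' (j+1)` for all `i, i'`, since otherwise the growth of
`F (j+1) / F j` contradicts the equality of the sums (`exists_chain_of_common`). A colourful
system is extracted greedily from such a family (`exists_colSys`).

**A colourful partition is Tverberg** (`ColSys.tvPt`). There are `(d+1)(r-1)+1` lifted points, one
more than the number of linear equations expressing that the parts have equal weighted sums, so a
nontrivial solution with real weights exists. After rescaling each `F j`, the sum over `T i` is
dominated by the term of `X i j`, and the rescaled dominant terms of all pairs `(i, j)` agree up
to a small error because consecutive blocks share a point. Hence all weights have the same sign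
(`same_sign`), and normalising them gives a common point of the convex hulls.

Since colourful words have a fixed length, the colourful partitions are exactly the minimal
Tverberg partitions.
-/

open Finset

/-- Points of `ℝ^d`. -/
abbrev Pt (d : ℕ) := Fin d → ℝ

/-- `W` is a `d`-colorful word on alphabet `σ`: it has length `(d+1)(|σ|-1)+1`
(length `0` if `σ = ∅`), and each of the `d+1` blocks of consecutive positions
`i(|σ|-1), …, i(|σ|-1)+|σ|-1` (0-indexed, `0 ≤ i ≤ d`) contains every letter of `σ`
exactly once. -/
def IsColorfulWord {α : Type*} [DecidableEq α] (d : ℕ) (σ : Finset α) (W : List α) : Prop :=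
  W.length = (d + 1) * (σ.card - 1) + min σ.card 1 ∧
    ∀ i ≤ d, ∀ a ∈ σ, ((W.drop (i * (σ.card - 1))).take σ.card).count a = 1

/-- `W` contains a `d`-colorful subword on alphabet `σ`. -/
def ContainsColorful {α : Type*} [DecidableEq α] (d : ℕ) (σ : Finset α) (W : List α) : Prop :=
  ∃ W' : List α, W'.Sublist W ∧ IsColorfulWord d σ W'

/-- A complex `Δ` on vertex set `V` is `d`-colorfully representable. -/
def ColorfullyRep {V : Type*} [DecidableEq V] (d : ℕ) (Δ : Set (Finset V)) : Prop :=
  ∃ W : List V, ∀ σ : Finset V, σ ∈ Δ ↔ ContainsColorful d σ W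

/-- A finite point set in `ℝ^d` is in general position: every subset of at most `d+1`
points is affinely independent. -/
def GenPos {d : ℕ} (P : Finset (Pt d)) : Prop :=
  ∀ S : Finset (Pt d), S ⊆ P → S.card ≤ d + 1 →
    AffineIndependent ℝ (fun x : (S : Set (Pt d)) => (x : Pt d))

/-- Pairwise disjoint finite sets `Q 1, …, Q n` induce the complex `Δ`:
for every `σ ⊆ [n]`, the convex hulls of the `Q i`, `i ∈ σ`, have a common point
iff `σ ∈ Δ`. -/
def Induces {d n : ℕ} (Δ : Set (Finset (Fin n))) (Q : Fin n → Finset (Pt d)) : Prop :=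
  (∀ i j : Fin n, i ≠ j → Disjoint (Q i) (Q j)) ∧
    ∀ σ : Finset (Fin n), (⋂ i ∈ σ, convexHull ℝ ((Q i : Set (Pt d)))).Nonempty ↔ σ ∈ Δ

/-- `Δ` is weakly `d`-Tverberg. -/
def WeaklyTverberg (d : ℕ) {n : ℕ} (Δ : Set (Finset (Fin n))) : Prop :=
  ∃ C : ℕ, ∀ P : Finset (Pt d), GenPos P → C ≤ P.card →
    ∃ Q : Fin n → Finset (Pt d), (∀ i, Q i ⊆ P) ∧ Induces Δ Q

/-- `Δ` is `d`-Tverberg: the inducing sets can be chosen to partition all of `P`. -/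
def IsTverberg (d : ℕ) {n : ℕ} (Δ : Set (Finset (Fin n))) : Prop :=
  ∃ C : ℕ, ∀ P : Finset (Pt d), GenPos P → C ≤ P.card →
    ∃ Q : Fin n → Finset (Pt d), (∀ i, Q i ⊆ P) ∧ (∀ x ∈ P, ∃ i, x ∈ Q i) ∧ Induces Δ Q

/-- Strong general position. -/
def StrongGenPos {d : ℕ} (P : Finset (Pt d)) : Prop :=
  ∀ r : ℕ, 2 ≤ r → ∀ Q : Fin r → Finset (Pt d),
    (∀ i, Q i ⊆ P) → (∀ i, (Q i).Nonempty) →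
    (∀ i j, i ≠ j → Disjoint (Q i) (Q j)) →
    (⨅ i, affineSpan ℝ ((Q i : Set (Pt d)))) = ⊥ ∨
      (Module.finrank ℝ (⨅ i, affineSpan ℝ ((Q i : Set (Pt d)))).direction : ℤ) =
        (∑ i, (Module.finrank ℝ (affineSpan ℝ ((Q i : Set (Pt d)))).direction : ℤ)) -
          (d : ℤ) * ((r : ℤ) - 1)

/-- `σ` is a facet (maximal face) of `Δ`. -/
def IsFacet {n : ℕ} (Δ : Set (Finset (Fin n))) (σ : Finset (Fin n)) : Prop :=
  σ ∈ Δ ∧ ∀ τ ∈ Δ, σ ⊆ τ → σ = τ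

/-- The simplicial complex associated to a graph: the empty set, the vertex singletons,
and the edges. -/
def graphComplex {V : Type*} (G : SimpleGraph V) : Set (Finset V) :=
  {σ : Finset V | σ.card ≤ 2 ∧ ∀ a ∈ σ, ∀ b ∈ σ, a ≠ b → G.Adj a b}

/-- The disjoint subsequences of `p` indexed by `T` form a Tverberg partition. -/
def TvPt {d m r : ℕ} (p : Fin m → Pt d) (T : Fin r → Finset (Fin m)) : Prop :=
  (⋂ i : Fin r, convexHull ℝ (p '' (T i : Set (Fin m)))).Nonempty

/-- A minimal Tverberg partition: deleting any single point destroys the common point. -/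
def MinTv {d m r : ℕ} (p : Fin m → Pt d) (T : Fin r → Finset (Fin m)) : Prop :=
  TvPt p T ∧ ∀ i : Fin r, ∀ x ∈ T i, ¬ TvPt p (fun j => (T j).erase x)

/-- The word on alphabet `{1,…,r}` associated to disjoint subsequences `T` of a sequence
of length `m`: each index belonging to `T i` is replaced by the letter `i`, read in order. -/
noncomputable def assocWord {m r : ℕ} (T : Fin r → Finset (Fin m)) : List (Fin r) :=
  (List.finRange m).filterMap (fun k =>
    if h : ∃ i, k ∈ T i then some h.choose else none)

/-! ### Ramsey's theorem -/

/-- Finite Ramsey theorem for `k`-element sets of natural numbers. The inductive step first passes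
to a set on which the colour of a `(k+1)`-set depends only on its minimum, then applies the
pigeonhole principle to that colour. -/
lemma ramsey_aux {κ : Type*} [Fintype κ] [DecidableEq κ] [Nonempty κ] (k n : ℕ) :
    ∃ N, ∀ (S : Finset ℕ), N ≤ S.card → ∀ c : Finset ℕ → κ,
      ∃ T ⊆ S, T.card = n ∧ ∃ col, ∀ A ⊆ T, A.card = k → c A = col := by
  induction k generalizing n with
  | zero =>
    refine ⟨n, fun S hS c => ?_⟩
    obtain ⟨T, hT, hc⟩ := Finset.exists_subset_card_eq hS
    refine ⟨T, hT, hc, c ∅, fun A _ hA => ?_⟩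
    rw [Finset.card_eq_zero.mp hA]
  | succ k ih =>
    -- a set of size `t` on which the colour depends only on the minimal element
    have pre : ∀ t : ℕ, ∃ N, ∀ (S : Finset ℕ), N ≤ S.card → ∀ c : Finset ℕ → κ,
        ∃ T ⊆ S, T.card = t ∧ ∃ col : ℕ → κ, ∀ A ⊆ T, A.card = k + 1 →
          ∀ a ∈ A, (∀ b ∈ A, a ≤ b) → c A = col a := by
      intro t
      induction t with
      | zero =>
        refine ⟨0, fun S _ c => ⟨∅, by simp, rfl, fun _ => Classical.arbitrary κ, ?_⟩⟩
        intro A hA hA1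
        rw [Finset.subset_empty.mp hA] at hA1
        simp at hA1
      | succ t iht =>
        obtain ⟨N1, hN1⟩ := iht
        obtain ⟨N2, hN2⟩ := ih N1
        refine ⟨N2 + 1, fun S hS c => ?_⟩
        have hne : S.Nonempty := Finset.card_pos.mp (by omega)
        set x := S.min' hne with hx
        have hxS : x ∈ S := S.min'_mem hne
        obtain ⟨T1, hT1, hc1, col1, h1⟩ := hN2 (S.erase x)
          (by rw [Finset.card_erase_of_mem hxS]; omega) (fun A => c (insert x A))
        obtain ⟨T2, hT2, hc2, col2, h2⟩ := hN1 T1 hc1.ge c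
        have hxlt : ∀ y ∈ T2, x < y := fun y hy => by
          have h := hT1 (hT2 hy)
          rw [Finset.mem_erase] at h
          exact lt_of_le_of_ne (S.min'_le y h.2) h.1.symm
        have hxT2 : x ∉ T2 := fun h => lt_irrefl _ (hxlt x h)
        refine ⟨insert x T2, ?_, by rw [Finset.card_insert_of_notMem hxT2, hc2],
          Function.update col2 x col1, ?_⟩
        · intro y hy
          rcases Finset.mem_insert.mp hy with rfl | hy
          · exact hxS
          · exact Finset.mem_of_mem_erase (hT1 (hT2 hy))
        · intro A hA hAc a ha hmin
          by_cases hxA : x ∈ A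
          · have hax : a = x := by
              apply le_antisymm (hmin x hxA)
              rcases Finset.mem_insert.mp (hA ha) with h | h
              · exact h.ge
              · exact (hxlt a h).le
            rw [hax, Function.update_self, ← h1 (A.erase x)]
            · rw [Finset.insert_erase hxA]
            · intro y hy
              rw [Finset.mem_erase] at hy
              exact hT2 (Finset.mem_of_mem_insert_of_ne (hA hy.2) hy.1)
            · rw [Finset.card_erase_of_mem hxA, hAc]; rfl
          · have hA2 : A ⊆ T2 := (Finset.subset_insert_iff_of_notMem hxA).mp hA
            rw [Function.update_of_ne (fun h : a = x => hxA (by rw [← h]; exact ha))]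
            exact h2 A hA2 hAc a ha hmin
    obtain ⟨N, hN⟩ := pre (Fintype.card κ * n)
    refine ⟨N, fun S hS c => ?_⟩
    obtain ⟨T, hT, hTc, col, hcol⟩ := hN S hS c
    obtain ⟨y, -, hy⟩ := Finset.exists_le_card_fiber_of_mul_le_card_of_maps_to
      (s := T) (t := (Finset.univ : Finset κ)) (f := col) (n := n) (fun _ _ => Finset.mem_univ _)
      Finset.univ_nonempty (by rw [hTc, Finset.card_univ])
    obtain ⟨T', hT', hc'⟩ := Finset.exists_subset_card_eq hy
    refine ⟨T', hT'.trans ((Finset.filter_subset _ _).trans hT), hc', y, fun A hA hAc => ?_⟩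
    have hne : A.Nonempty := Finset.card_pos.mp (by omega)
    rw [hcol A (hA.trans (hT'.trans (Finset.filter_subset _ _))) hAc _ (A.min'_mem hne)
      (fun b hb => A.min'_le b hb)]
    exact (Finset.mem_filter.mp (hT' (hA (A.min'_mem hne)))).2

/-- Finite Ramsey theorem, for colourings of increasing `k`-tuples of natural numbers. -/
lemma ramsey_tuple (κ : Type*) [Finite κ] [Nonempty κ] (k n : ℕ) :
    ∃ N, ∀ (S : Finset ℕ), N ≤ S.card → ∀ c : (Fin k → ℕ) → κ,
      ∃ T ⊆ S, T.card = n ∧ ∃ col, ∀ h : Fin k → ℕ, StrictMono h → (∀ i, h i ∈ T) →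
        c h = col := by
  classical
  have := Fintype.ofFinite κ
  obtain ⟨N, hN⟩ := ramsey_aux (κ := κ) k n
  refine ⟨N, fun S hS c => ?_⟩
  obtain ⟨T, hT, hc, col, hcol⟩ := hN S hS
    (fun A => if hA : A.card = k then c (A.orderEmbOfFin hA) else Classical.arbitrary κ)
  refine ⟨T, hT, hc, col, fun h hm hh => ?_⟩
  have hcard : (Finset.univ.image h).card = k := by
    rw [Finset.card_image_of_injective _ hm.injective, Finset.card_univ, Fintype.card_fin]
  have := hcol (Finset.univ.image h) (by intro y hy; simp at hy; obtain ⟨i, rfl⟩ := hy; exact hh i)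
    hcard
  rw [dif_pos hcard] at this
  rw [← this, ← Finset.orderEmbOfFin_unique hcard (f := h) (by simp) hm]

/-! ### Cross-ratios and the Plücker relation -/

/-- A function `B`, positive on the pairs `x < y ≤ K` and satisfying the three-term Plücker relation,
has a quadruple of cross-ratio greater than `C`, provided that `K` is large in terms of `C`.
If not, the ratio `B i (K-1) / B i K` shrinks by the factor `1 - 1/C` at each step in `i`, whereas
comparison with the index `0` bounds it below by `1/C` times its value at `i = 1`. -/
lemma cross_bound (C : ℝ) (hC : 1 < C) : ∃ K : ℕ, ∀ B : ℕ → ℕ → ℝ,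
    (∀ x y, x < y → y ≤ K → 0 < B x y) →
    (∀ x y z t, x < y → y < z → z < t → t ≤ K →
      B x z * B y t = B x y * B z t + B x t * B y z) →
    ∃ x y z t, x < y ∧ y < z ∧ z < t ∧ t ≤ K ∧ C * (B x y * B z t) < B x z * B y t := by
  obtain ⟨k, hk⟩ := exists_pow_lt_of_lt_one (show 0 < 1 / C by positivity)
    (show 1 - 1 / C < 1 by have : 0 < 1 / C := by positivity
                           linarith)
  refine ⟨k + 4, fun B hpos hpl => ?_⟩
  by_contra! hcon
  have hC0 : 0 < 1 - 1 / C := by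
    rw [sub_pos, div_lt_one (by linarith)]; exact hC
  set E : ℕ → ℝ := fun i => B i (k + 3) / B i (k + 4) with hE
  have step : ∀ i, i + 1 < k + 3 → E (i + 1) ≤ (1 - 1 / C) * E i := by
    intro i hi
    have h1 := hcon i (i + 1) (k + 3) (k + 4) (by omega) hi (by omega) le_rfl
    have h2 := hpl i (i + 1) (k + 3) (k + 4) (by omega) hi (by omega) le_rfl
    have p1 := hpos i (k + 4) (by omega) le_rfl
    have p2 := hpos (i + 1) (k + 4) (by omega) le_rfl
    have h3 : C * (B i (k + 4) * B (i + 1) (k + 3)) ≤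
        (C - 1) * (B i (k + 3) * B (i + 1) (k + 4)) := by
      nlinarith
    have e1 : (1 - 1 / C) * E i = ((C - 1) * B i (k + 3)) / (C * B i (k + 4)) := by
      simp only [hE]; field_simp
    rw [e1, hE, div_le_div_iff₀ p2 (by positivity)]
    linarith
  have geo : ∀ i, i ≤ k → E (1 + i) ≤ (1 - 1 / C) ^ i * E 1 := by
    intro i
    induction i with
    | zero => intro _; simp
    | succ i ih =>
      intro hi
      calc E (1 + (i + 1)) ≤ (1 - 1 / C) * E (1 + i) := step (1 + i) (by omega)
        _ ≤ (1 - 1 / C) * ((1 - 1 / C) ^ i * E 1) := by gcongr; exact ih (by omega)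
        _ = _ := by ring
  have E1 : 0 < E 1 := div_pos (hpos _ _ (by omega) (by omega)) (hpos _ _ (by omega) (by omega))
  have hlow : ∀ i, 1 < i → i < k + 3 → E 1 ≤ C * E i := by
    intro i h1 hi
    have h2 := hcon 0 1 i (k + 3) (by omega) h1 hi (by omega)
    have h3 := hpl 0 1 i (k + 4) (by omega) h1 (by omega) le_rfl
    have p0 := hpos 0 1 (by omega) (by omega)
    have p1 := hpos 1 (k + 4) (by omega) le_rfl
    have p2 := hpos i (k + 4) (by omega) le_rfl
    have p3 := hpos 1 (k + 3) (by omega) (by omega)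
    have p4 := hpos 0 (k + 4) (by omega) (by omega)
    have p5 := hpos 1 i (by omega) (by omega)
    have h4 : B 0 1 * B i (k + 4) ≤ B 0 i * B 1 (k + 4) := by
      rw [h3]; have := mul_pos p4 p5; linarith
    have h5 : B 0 1 * (B 1 (k + 3) * B i (k + 4)) ≤ B 0 1 * (C * B i (k + 3) * B 1 (k + 4)) := by
      nlinarith [mul_le_mul_of_nonneg_right h4 p3.le, mul_le_mul_of_nonneg_right h2 p1.le]
    have h6 := le_of_mul_le_mul_left h5 p0
    have e1 : C * E i = (C * B i (k + 3)) / B i (k + 4) := by simp only [hE]; ring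
    rw [e1, hE, div_le_div_iff₀ p1 p2]
    exact h6
  have g1 := step (1 + k) (by omega)
  have g2 := geo k le_rfl
  have g3 := hlow (1 + k + 1) (by omega) (by omega)
  have : C * (1 - 1 / C) ^ k < 1 := by
    calc C * (1 - 1 / C) ^ k < C * (1 / C) := by gcongr
      _ = 1 := by field_simp
  have g4 : E (1 + k + 1) ≤ (1 - 1 / C) ^ k * E 1 := by
    have hk0 : 0 ≤ (1 - 1 / C) ^ k * E 1 := by positivity
    have hk1 : E (1 + k + 1) ≤ (1 - 1 / C) * ((1 - 1 / C) ^ k * E 1) :=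
      g1.trans (by gcongr)
    have : 0 ≤ 1 / C := by positivity
    nlinarith
  nlinarith

/-- The three-term Plücker relation for determinants in which all rows except `j` and `j'` are fixed.
It follows by expanding `x` in the basis formed by `u`, `w` and the fixed rows, hence the
hypothesis `h0`. -/
lemma plucker {D : ℕ} (M : Fin D → Fin D → ℝ) {j j' : Fin D} (hj : j ≠ j')
    (B : (Fin D → ℝ) → (Fin D → ℝ) → ℝ)
    (hB : ∀ x y, B x y = Matrix.det (Matrix.of (Function.update (Function.update M j x) j' y)))
    (u w x y : Fin D → ℝ) (h0 : B u w ≠ 0) :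
    B u w * B x y = B x w * B u y - B u x * B y w := by
  set F : (Fin D → ℝ) [⋀^Fin D]→ₗ[ℝ] ℝ := Matrix.detRowAlternating with hF
  have hB' : ∀ x y, B x y = F (Function.update (Function.update M j x) j' y) := hB
  have hB2 : ∀ x y, B x y = F (Function.update (Function.update M j' y) j x) := fun x y => by
    rw [hB', Function.update_comm hj]
  have hself : ∀ x, B x x = 0 := fun x => by
    rw [hB']
    refine F.map_eq_zero_of_eq _ ?_ hj
    simp [hj]
  have hadd1 : ∀ x x' y, B (x + x') y = B x y + B x' y := fun x x' y => by
    simp only [hB2]; exact F.map_update_add _ _ _ _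
  have hadd2 : ∀ x y y', B x (y + y') = B x y + B x y' := fun x y y' => by
    simp only [hB']; exact F.map_update_add _ _ _ _
  have hanti : ∀ x y, B y x = - B x y := fun x y => by
    have := hself (x + y)
    rw [hadd1, hadd2, hadd2, hself, hself] at this
    linarith
  set N : Fin D → Fin D → ℝ := Function.update (Function.update M j u) j' w with hN
  have hdet : IsUnit (Matrix.det (Matrix.of N)) := by
    rw [isUnit_iff_ne_zero, hN, ← hB]; exact h0
  obtain ⟨c, hc⟩ : ∃ c : Fin D → ℝ, x = ∑ k, c k • N k := by
    refine ⟨Matrix.vecMul x (Matrix.of N)⁻¹, ?_⟩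
    have : Matrix.vecMul (Matrix.vecMul x (Matrix.of N)⁻¹) (Matrix.of N) = x := by
      rw [Matrix.vecMul_vecMul, Matrix.nonsing_inv_mul _ hdet, Matrix.vecMul_one]
    conv_lhs => rw [← this]
    rw [Matrix.vecMul_eq_sum]
    rfl
  -- the fixed rows do not contribute to `B x b`
  have key : ∀ b, B x b = c j * B u b + c j' * B w b := fun b => by
    have h1 : B x b = ∑ k, c k * B (N k) b := by
      simp only [hB2]
      rw [hc, F.map_update_sum]
      refine Finset.sum_congr rfl fun k _ => ?_
      rw [F.map_update_smul, smul_eq_mul]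
    rw [h1, ← Finset.sum_subset (Finset.subset_univ {j, j'}), Finset.sum_pair hj]
    · simp [hN, hj]
    · intro k _ hk
      simp only [Finset.mem_insert, Finset.mem_singleton, not_or] at hk
      rw [hB2, F.map_eq_zero_of_eq _ _ (Ne.symm hk.1), mul_zero]
      simp [hN, hk.1, hk.2]
  have k1 := key w
  have k2 := key u
  have k3 := key y
  rw [hself] at k1 k2
  rw [hanti u x, hanti u w] at k2
  linear_combination B u w * k3 - B u y * k1 - B y w * k2 + B u w * c j' * hanti y w

/-! ### Rapidly growing subsequences -/

/-- The sequence of row indices with `a` and `b` in the positions `j` and `j + 1`, and with `E k`,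
respectively `L k`, in the positions `k` before, respectively after, these two. -/
def rowsIdx (E L : ℕ → ℕ) (j a b k : ℕ) : ℕ :=
  if k < j then E k else if k = j then a else if k = j + 1 then b else L k

/-- The determinant of the vectors `v (t 0), …, v (t (D - 1))` of `ℝ^D`. The index sequence `t` is
defined on all of `ℕ`, but only its first `D` values matter. -/
noncomputable def minor {D : ℕ} (v : ℕ → Fin D → ℝ) (t : ℕ → ℕ) : ℝ :=
  Matrix.det (Matrix.of fun k : Fin D => v (t k))

lemma minor_congr {D : ℕ} (v : ℕ → Fin D → ℝ) {t t' : ℕ → ℕ} (h : ∀ k < D, t k = t' k) :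
    minor v t = minor v t' := by
  unfold minor
  congr 1
  ext k i
  simp [h k k.2]

/-- The Plücker relation, with the four variable indices in the rows `j` and `j + 1`. -/
lemma minor_plucker {D : ℕ} (v : ℕ → Fin D → ℝ) (E L : ℕ → ℕ) (j : ℕ) (hj : j + 1 < D)
    (u w x y : ℕ) (h0 : minor v (rowsIdx E L j u w) ≠ 0) :
    minor v (rowsIdx E L j u w) * minor v (rowsIdx E L j x y) =
      minor v (rowsIdx E L j x w) * minor v (rowsIdx E L j u y) -
      minor v (rowsIdx E L j u x) * minor v (rowsIdx E L j y w) := by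
  have hne : (⟨j, by omega⟩ : Fin D) ≠ ⟨j + 1, hj⟩ := by simp
  have key : ∀ a b, minor v (rowsIdx E L j a b) = Matrix.det (Matrix.of (Function.update
      (Function.update (fun k : Fin D => v (if (k : ℕ) < j then E k else L k)) ⟨j, by omega⟩ (v a))
        ⟨j + 1, hj⟩ (v b))) := by
    intro a b
    unfold minor
    congr 2
    funext k
    by_cases h1 : k = ⟨j + 1, hj⟩
    · subst h1; simp [rowsIdx]
    · rw [Function.update_of_ne h1]
      by_cases h2 : k = ⟨j, by omega⟩
      · subst h2; simp [rowsIdx]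
      · rw [Function.update_of_ne h2]
        have h1' : (k : ℕ) ≠ j + 1 := fun h => h1 (Fin.ext h)
        have h2' : (k : ℕ) ≠ j := fun h => h2 (Fin.ext h)
        simp [rowsIdx, h1', h2']
  simp only [key] at h0 ⊢
  exact plucker _ hne _ (fun _ _ => rfl) _ _ _ _ h0

/-- Every long sequence of vectors of `ℝ^(d+1)` with nonvanishing maximal minors has a subsequence of
length `m`, and linear functionals `F 0, …, F d` positive on it, such that each ratio
`F (j+1) / F j` grows by a factor of more than `C` from each vector to any later one.
The subsequence is taken from the middle of a homogeneous set. The value of `F j` at a vector is,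
up to a common sign, the minor formed by the first `j` members of that set, the given vector, and
its last `d - j` members. -/
theorem vector_universality (d m : ℕ) (C : ℝ) (hC : 1 < C) :
    ∃ N : ℕ, ∀ v : ℕ → Fin (d + 1) → ℝ,
      (∀ t : Fin (d + 1) → ℕ, StrictMono t → (∀ k, t k < N) →
        Matrix.det (Matrix.of fun k => v (t k)) ≠ 0) →
      ∃ g : Fin m → Fin N, StrictMono g ∧ ∃ F : ℕ → (Fin (d + 1) → ℝ) →ₗ[ℝ] ℝ,
        (∀ x, ∀ j ≤ d, 0 < F j (v (g x))) ∧
        ∀ x x', x < x' → ∀ j < d,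
          C * (F j (v (g x')) * F (j + 1) (v (g x))) < F j (v (g x)) * F (j + 1) (v (g x')) := by
  classical
  obtain ⟨K, hK⟩ := cross_bound C hC
  set D := d + 1 with hD
  set n := 2 * D + K + m with hn
  obtain ⟨N2, hN2⟩ := ramsey_tuple (Fin d → Prop) (D + 2) n
  obtain ⟨N, hN⟩ := ramsey_tuple Prop D (max N2 (n + 2))
  refine ⟨N, fun v hv => ?_⟩
  -- on `T1` all minors with increasing indices have the same sign
  obtain ⟨T1, hT1, hc1, col1, h1⟩ := hN (Finset.range N) (by simp)
    (fun t => 0 < Matrix.det (Matrix.of fun k => v (t k)))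
  -- on `T2`, for each `j`, the cross-ratios of four consecutive rows starting at row `j` of a
  -- `(D+2)`-tuple are either all greater than `C` or all at most `C`
  obtain ⟨T2, hT2, hc2, col2, h2⟩ := hN2 T1 (by rw [hc1]; exact le_max_left _ _)
    (fun h j =>
      let H : ℕ → ℕ := fun k => if hk : k < D + 2 then h ⟨k, hk⟩ else 0
      let B : ℕ → ℕ → ℝ := fun a b => minor v (rowsIdx H (fun k => H (k + 2)) j (H (j + a)) (H (j + b)))
      C * (B 0 1 * B 2 3) < B 0 2 * B 1 3)
  set σ : ℝ := if col1 then 1 else -1 with hσ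
  have hσ2 : σ * σ = 1 := by rw [hσ]; split_ifs <;> norm_num
  -- increasing enumeration of the homogeneous set
  obtain ⟨e, he, heT⟩ : ∃ e : ℕ → ℕ, (∀ a b, a < b → b < n → e a < e b) ∧ ∀ a < n, e a ∈ T2 := by
    refine ⟨fun a => if h : a < n then T2.orderEmbOfFin hc2 ⟨a, h⟩ else 0, ?_, ?_⟩
    · intro a b hab hb
      simp only [hb, hab.trans hb, dif_pos]
      exact (T2.orderEmbOfFin hc2).strictMono hab
    · intro a ha
      simp only [ha, dif_pos]
      exact Finset.orderEmbOfFin_mem _ _ _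
  have hpos : ∀ ψ : ℕ → ℕ, (∀ a b, a < b → b < D → ψ a < ψ b) → (∀ a < D, ψ a < n) →
      0 < σ * minor v (fun k => e (ψ k)) := by
    intro ψ hψ hψn
    have hmono : StrictMono (fun k : Fin D => e (ψ k)) := fun a b hab =>
      he _ _ (hψ a b hab b.2) (hψn b b.2)
    have hmem : ∀ k : Fin D, e (ψ k) ∈ T1 := fun k => hT2 (heT _ (hψn k k.2))
    have h3 := h1 _ hmono hmem
    have h4 : minor v (fun k => e (ψ k)) ≠ 0 :=
      hv _ hmono fun k => Finset.mem_range.mp (hT1 (hmem k))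
    change (0 < minor v (fun k => e (ψ k))) = col1 at h3
    by_cases hcol : col1
    · rw [hσ, if_pos hcol, one_mul, h3]; exact hcol
    · rw [hσ, if_neg hcol]
      rw [← h3] at hcol
      have := lt_of_le_of_ne (not_lt.mp hcol) h4
      linarith
  -- the colour of an increasing tuple, in terms of its indices
  have hcolor : ∀ (φ : ℕ → ℕ) (j : Fin d), (∀ a b, a < b → b < D + 2 → φ a < φ b) →
      (∀ a < D + 2, φ a < n) → ∀ ψ : ℕ → ℕ → ℕ → ℕ,
      (∀ a b, a < b → b < 4 → (a = 0 ↔ b ≠ 3) → ∀ k < D,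
        ψ a b k = rowsIdx φ (fun k => φ (k + 2)) j (φ (j + a)) (φ (j + b)) k) →
      ((C * ((σ * minor v (fun k => e (ψ 0 1 k))) * (σ * minor v (fun k => e (ψ 2 3 k)))) <
        (σ * minor v (fun k => e (ψ 0 2 k))) * (σ * minor v (fun k => e (ψ 1 3 k)))) ↔
        col2 j) := by
    intro φ j hφ hφn ψ hψ
    have h3 := congrFun (h2 (fun k => e (φ k)) (fun a b hab => he _ _ (hφ a b hab b.2) (hφn b b.2))
      (fun k => heT _ (hφn k k.2))) j
    rw [← h3]
    have hj := j.2
    have key : ∀ a b, a < b → b < 4 → (a = 0 ↔ b ≠ 3) →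
        minor v (rowsIdx (fun k => if hk : k < D + 2 then e (φ k) else 0)
          (fun k => if hk : k + 2 < D + 2 then e (φ (k + 2)) else 0) j
          (if hk : j + a < D + 2 then e (φ (j + a)) else 0)
          (if hk : j + b < D + 2 then e (φ (j + b)) else 0)) =
        minor v (fun k => e (ψ a b k)) := by
      intro a b ha hb hab
      apply minor_congr
      intro k hk
      rw [hψ a b ha hb hab k hk, dif_pos (show (j : ℕ) + a < D + 2 by omega),
        dif_pos (show (j : ℕ) + b < D + 2 by omega)]
      unfold rowsIdx
      beta_reduce
      rw [dif_pos (show k < D + 2 by omega), dif_pos (show k + 2 < D + 2 by omega)]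
      split_ifs <;> rfl
    dsimp only
    rw [key 0 1 (by omega) (by omega) (by omega), key 2 3 (by omega) (by omega) (by omega),
      key 0 2 (by omega) (by omega) (by omega), key 1 3 (by omega) (by omega) (by omega)]
    have r : ∀ a b : ℝ, (σ * a) * (σ * b) = a * b := fun a b => by
      linear_combination a * b * hσ2
    rw [r, r]
  -- `cross_bound` produces one cross-ratio greater than `C`, so by homogeneity all of them are
  have hall : ∀ j : Fin d, col2 j := by
    intro j
    have hj := j.2
    set L : ℕ → ℕ := fun k => n - D + k with hL
    set B : ℕ → ℕ → ℝ := fun a b =>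
      σ * minor v (fun k => e (rowsIdx id L j (j + a) (j + b) k)) with hB
    have hBpos : ∀ x y, x < y → y ≤ K → 0 < B x y := by
      intro x y hxy hy
      apply hpos
      · intro a b hab hb
        unfold rowsIdx
        simp only [hL, id]
        split_ifs <;> omega
      · intro a ha
        unfold rowsIdx
        simp only [hL, id]
        split_ifs <;> omega
    obtain ⟨x, y, z, t, hxy, hyz, hzt, ht, hlt⟩ := hK B hBpos (by
      intro x y z t hxy hyz hzt ht
      have hcomp : ∀ a b, minor v (fun k => e (rowsIdx id L j (j + a) (j + b) k)) =
          minor v (rowsIdx e (fun k => e (L k)) j (e (j + a)) (e (j + b))) := by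
        intro a b
        apply minor_congr
        intro k hk
        unfold rowsIdx
        simp only [id]
        split_ifs <;> rfl
      have h0 : minor v (rowsIdx e (fun k => e (L k)) j (e (j + x)) (e (j + t))) ≠ 0 := by
        have := (hBpos x t (by omega) ht).ne'
        rw [hB] at this
        simp only [hcomp] at this
        exact right_ne_zero_of_mul this
      have hpl := minor_plucker v e (fun k => e (L k)) j (by omega) (e (j + x)) (e (j + t))
        (e (j + y)) (e (j + z)) h0
      simp only [hB, hcomp]
      linear_combination (-σ * σ) * hpl)
    set η : ℕ → ℕ := fun a => if a = 0 then x else if a = 1 then y else if a = 2 then z else t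
      with hη
    obtain ⟨φ, hφ⟩ : ∃ φ : ℕ → ℕ, ∀ k, φ k = if k < j then k else if k < j + 4 then j + η (k - j)
        else n - D - 2 + k := ⟨_, fun _ => rfl⟩
    refine (hcolor φ j ?_ ?_ (fun a b k => rowsIdx id L j (j + η a) (j + η b) k) ?_).mp ?_
    · intro a b hab hb
      rw [hφ, hφ]
      simp only [hη]
      split_ifs <;> omega
    · intro a ha
      rw [hφ]
      simp only [hη]
      split_ifs <;> omega
    · intro a b hab hb _ k hk
      unfold rowsIdx
      have e1 : φ (j + a) = j + η a := by
        rw [hφ, if_neg (by omega), if_pos (by omega), Nat.add_sub_cancel_left]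
      have e2 : φ (j + b) = j + η b := by
        rw [hφ, if_neg (by omega), if_pos (by omega), Nat.add_sub_cancel_left]
      rw [e1, e2]
      split_ifs with c1 c2 c3
      · rw [hφ, if_pos c1]; rfl
      · rfl
      · rfl
      · change L k = φ (k + 2)
        rw [hφ, if_neg (by omega), if_neg (by omega)]
        simp only [hL]; omega
    · exact hlt
  -- the functionals
  set f : ℕ → ℕ → ℕ → ℕ := fun j a k => if k < j then k else if k = j then a else n - D + k with hf
  have hlin : ∀ j : ℕ, ∃ F : (Fin D → ℝ) →ₗ[ℝ] ℝ, j ≤ d → ∀ a,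
      F (v (e a)) = σ * minor v (fun k => e (f j a k)) := by
    intro j
    by_cases hj : j ≤ d
    · refine ⟨σ • (Matrix.detRowAlternating (n := Fin D) (R := ℝ)).toMultilinearMap.toLinearMap
        (fun k => v (e (f j 0 k))) ⟨j, by omega⟩, fun _ a => ?_⟩
      rw [LinearMap.smul_apply, smul_eq_mul]
      congr 1
      rw [MultilinearMap.toLinearMap_apply]
      unfold minor
      change Matrix.det (Matrix.of (Function.update _ _ _)) = _
      congr 2
      funext k
      by_cases h : k = ⟨j, by omega⟩
      · subst h; simp [hf]
      · have h' : (k : ℕ) ≠ j := fun h' => h (Fin.ext h')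
        rw [Function.update_of_ne h]
        simp [hf, h']
    · exact ⟨0, fun h => absurd h hj⟩
  choose F hF using hlin
  refine ⟨fun x => ⟨e (D + x), Finset.mem_range.mp (hT1 (hT2 (heT _ (by omega))))⟩,
    fun a b hab => he _ _ (by have : (a : ℕ) < b := hab
                              omega) (by omega), F, ?_, ?_⟩
  · intro x j hj
    rw [hF j hj]
    apply hpos
    · intro a b hab hb
      simp only [hf]
      split_ifs <;> omega
    · intro a ha
      simp only [hf]
      split_ifs <;> omega
  · intro x x' hxx j hj
    have hx' := x'.2
    have hxx' : (x : ℕ) < x' := hxx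
    simp only [hF j hj.le, hF (j + 1) hj]
    -- rows `j` and `j + 3` of this tuple are fixed; `x` and `x'` fill the two rows between them, so
    -- the cross-ratio compares the values of `F j` and `F (j + 1)`
    obtain ⟨φ, hφ⟩ : ∃ φ : ℕ → ℕ, ∀ k, φ k = if k ≤ j then k else if k = j + 1 then D + x else
      if k = j + 2 then D + x' else n - D - 2 + k := ⟨_, fun _ => rfl⟩
    have h3 := (hcolor φ ⟨j, hj⟩ (by intro a b hab hb; rw [hφ, hφ]; split_ifs <;> omega)
      (by intro a ha; rw [hφ]; split_ifs <;> omega)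
      (fun a b => if a = 0 then f (j + 1) (φ (j + b)) else f j (φ (j + a))) ?_).mpr (hall _)
    · have e1 : φ (j + 1) = D + x := by
        rw [hφ, if_neg (by omega), if_pos rfl]
      have e2 : φ (j + 2) = D + x' := by
        rw [hφ, if_neg (by omega), if_neg (by omega), if_pos rfl]
      simp only [if_true, OfNat.ofNat_ne_zero, one_ne_zero, if_false, e1, e2] at h3
      linarith
    · intro a b hab hb hcase k hk
      have s1 : ∀ k ≤ j, φ k = k := fun k hk => by rw [hφ, if_pos hk]
      have s2 : ∀ k, j + 3 ≤ k → φ k = n - D - 2 + k := fun k hk => by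
        rw [hφ, if_neg (by omega), if_neg (by omega), if_neg (by omega)]
      have hfk : ∀ i c k, f i c k = if k < i then k else if k = i then c else n - D + k :=
        fun _ _ _ => rfl
      clear_value f
      change _ = if k < j then φ k else if k = j then φ (j + a) else
        if k = j + 1 then φ (j + b) else φ (k + 2)
      by_cases ha : a = 0
      · subst ha
        rw [if_pos rfl, hfk, add_zero]
        rcases lt_trichotomy k j with c | c | c
        · rw [if_pos (by omega), if_pos c, s1 k c.le]
        · rw [if_pos (by omega), if_neg (by omega), if_pos c, s1 j le_rfl, c]
        · rw [if_neg (by omega), if_neg (by omega : ¬ k < j), if_neg (by omega : ¬ k = j)]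
          split_ifs with c3
          · rfl
          · rw [s2 (k + 2) (by omega)]; omega
      · have hb3 : b = 3 := by omega
        subst hb3
        rw [if_neg ha, hfk, s2 (j + 3) le_rfl]
        split_ifs with c1 c2 c3
        · rw [s1 k c1.le]
        · rfl
        · omega
        · rw [s2 (k + 2) (by omega)]; omega

/-! ### Colourful systems and weighted sums -/

/-- Suppose that positive numbers `a x j` have ratios `a x (j+1) / a x j` growing by a factor `C > m²`
along `x`, and that convex weights on the sets `T i` give the same sums `Z j` for all `i`. Then the
points `X i j` carrying the largest terms of these sums satisfy `X i j ≤ X i' (j+1)`: each largest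
term is at least `Z j / m`, so a violation would contradict the growth of the ratios. -/
lemma exists_chain_of_common {d m r : ℕ} (a : Fin m → ℕ → ℝ) (C : ℝ) (hC0 : (m : ℝ) ^ 2 < C)
    (hpos : ∀ x, ∀ j ≤ d, 0 < a x j)
    (hC : ∀ x x', x < x' → ∀ j < d, C * (a x' j * a x (j + 1)) < a x j * a x' (j + 1))
    (T : Fin r → Finset (Fin m)) (lam : Fin r → Fin m → ℝ)
    (h0 : ∀ i, ∀ x ∈ T i, 0 ≤ lam i x) (h1 : ∀ i, ∑ x ∈ T i, lam i x = 1)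
    (Z : ℕ → ℝ) (hZ : ∀ i, ∀ j ≤ d, ∑ x ∈ T i, lam i x * a x j = Z j) :
    ∃ X : Fin r → ℕ → Fin m, (∀ i j, X i j ∈ T i) ∧ ∀ i i' j, j < d → X i j ≤ X i' (j + 1) := by
  have hne : ∀ i, (T i).Nonempty := fun i => by
    by_contra h
    have := h1 i
    rw [Finset.not_nonempty_iff_eq_empty.mp h] at this
    simp at this
  have hmax : ∀ i (j : ℕ), ∃ x ∈ T i, ∀ y ∈ T i, lam i y * a y j ≤ lam i x * a x j :=
    fun i j => Finset.exists_max_image (T i) (fun x => lam i x * a x j) (hne i)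
  choose X hX hXm using hmax
  refine ⟨X, hX, fun i i' j hj => ?_⟩
  by_contra hlt
  rw [not_le] at hlt
  have hm0 : (0 : ℝ) < m := by
    have : 0 < m := lt_of_le_of_lt (Nat.zero_le _) (X i j).2
    exact_mod_cast this
  have hterm : ∀ i j, j ≤ d → ∀ x ∈ T i, 0 ≤ lam i x * a x j := fun i j hj x hx =>
    mul_nonneg (h0 i x hx) (hpos x j hj).le
  have hup : ∀ i j, j ≤ d → ∀ x ∈ T i, lam i x * a x j ≤ Z j := fun i j hj x hx => by
    rw [← hZ i j hj]
    exact Finset.single_le_sum (f := fun x => lam i x * a x j) (hterm i j hj) hx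
  have hZpos : ∀ j ≤ d, 0 < Z j := fun j hj => by
    rw [← hZ i j hj]
    obtain ⟨x, hx, hx0⟩ : ∃ x ∈ T i, 0 < lam i x := by
      by_contra! hcon
      have := Finset.sum_nonpos hcon
      rw [h1 i] at this
      linarith
    exact Finset.sum_pos' (hterm i j hj) ⟨x, hx, mul_pos hx0 (hpos x j hj)⟩
  have hlow : ∀ i j, j ≤ d → Z j ≤ m * (lam i (X i j) * a (X i j) j) := fun i j hj => by
    rw [← hZ i j hj]
    calc _ ≤ (T i).card • (lam i (X i j) * a (X i j) j) :=
          Finset.sum_le_card_nsmul _ _ _ (hXm i j)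
      _ = ((T i).card : ℝ) * (lam i (X i j) * a (X i j) j) := nsmul_eq_mul _ _
      _ ≤ _ := by
        gcongr
        · exact hterm i j hj _ (hX i j)
        · simpa using Finset.card_le_univ (T i)
  have e1 := hlow i j hj.le
  have e2 := hlow i' (j + 1) hj
  have e3 := hup i (j + 1) hj _ (hX i j)
  have e4 := hup i' j hj.le _ (hX i' (j + 1))
  have e5 := hC _ _ hlt j hj
  have p1 := hZpos j hj.le
  have p2 := hZpos (j + 1) hj
  have n1 := h0 i _ (hX i j)
  have n2 := h0 i' _ (hX i' (j + 1))
  set P := lam i (X i j)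
  set Q := lam i' (X i' (j + 1))
  have f1 : Z j * Z (j + 1) ≤ (m : ℝ) ^ 2 *
      ((P * a (X i j) j) * (Q * a (X i' (j + 1)) (j + 1))) := by
    calc Z j * Z (j + 1) ≤ (m * (P * a (X i j) j)) * (m * (Q * a (X i' (j + 1)) (j + 1))) := by
          apply mul_le_mul e1 e2 p2.le (by linarith)
      _ = _ := by ring
  have f2 : C * ((P * a (X i j) j) * (Q * a (X i' (j + 1)) (j + 1))) ≤ Z j * Z (j + 1) := by
    calc _ = (P * Q) * (C * (a (X i j) j * a (X i' (j + 1)) (j + 1))) := by ring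
      _ ≤ (P * Q) * (a (X i' (j + 1)) j * a (X i j) (j + 1)) := by gcongr
      _ = (Q * a (X i' (j + 1)) j) * (P * a (X i j) (j + 1)) := by ring
      _ ≤ _ := mul_le_mul e4 e3 (mul_nonneg n1 (hpos _ _ hj).le) p1.le
  have f3 : 0 < (P * a (X i j) j) * (Q * a (X i' (j + 1)) (j + 1)) := by
    have := mul_pos p1 p2
    have h := this.trans_le f1
    exact pos_of_mul_pos_right h (by positivity)
  have := mul_lt_mul_of_pos_right hC0 f3
  linarith

/-- A colourful system for `T`: each `T i` consists of the points `X i 0, …, X i d`, the `j`-th block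
`{X i j : i}` has largest element `X (c j) j`, and this point is also the smallest element of the
next block, in which it again belongs to `T (c j)`. Values of `X` and `c` at `j > d` are
irrelevant. -/
structure ColSys {m r : ℕ} (d : ℕ) (T : Fin r → Finset (Fin m)) (X : Fin r → ℕ → Fin m)
    (c : ℕ → Fin r) : Prop where
  mem : ∀ i, ∀ j ≤ d, X i j ∈ T i
  cover : ∀ i, ∀ x ∈ T i, ∃ j ≤ d, X i j = x
  top : ∀ i, ∀ j ≤ d, X i j ≤ X (c j) j
  share : ∀ j < d, X (c j) (j + 1) = X (c j) j
  bot : ∀ i, ∀ j < d, X (c j) j ≤ X i (j + 1)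

lemma ColSys.mono {m r d : ℕ} {T : Fin r → Finset (Fin m)} {X : Fin r → ℕ → Fin m}
    {c : ℕ → Fin r} (h : ColSys d T X c) (i i' : Fin r) {j j' : ℕ} (hj : j < j') (hj' : j' ≤ d) :
    X i j ≤ X i' j' := by
  induction j', hj using Nat.le_induction generalizing i' with
  | base => exact (h.top i j (by omega)).trans (h.bot i' j hj')
  | succ n hn ih =>
    exact (ih (c n) (by omega)).trans (h.bot i' n (by omega))

/-- The greedy choice: the first block is `{X i 0 : i}`, and each further block keeps the largest point
of the previous block and takes `X i (j+1)` for every other `i`. -/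
lemma exists_colSys {d m r : ℕ} (hr : 2 ≤ r) (T : Fin r → Finset (Fin m))
    (X : Fin r → ℕ → Fin m) (hX : ∀ i j, X i j ∈ T i)
    (hmono : ∀ i i' j, j < d → X i j ≤ X i' (j + 1)) :
    ∃ (T' : Fin r → Finset (Fin m)) (Y : Fin r → ℕ → Fin m) (c : ℕ → Fin r),
      (∀ i, T' i ⊆ T i) ∧ ColSys d T' Y c := by
  have : Nonempty (Fin r) := ⟨⟨0, by omega⟩⟩
  have ham : ∀ f : Fin r → Fin m, ∃ c, ∀ i, f i ≤ f c := fun f => Finite.exists_max f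
  choose am ham using ham
  obtain ⟨Y, hY0, hYs⟩ : ∃ Y : ℕ → Fin r → Fin m, Y 0 = (fun i => X i 0) ∧
      ∀ j, Y (j + 1) = fun i => if i = am (Y j) then Y j i else X i (j + 1) :=
    ⟨fun j => Nat.rec (fun i => X i 0) (fun j f i => if i = am f then f i else X i (j + 1)) j,
      rfl, fun j => rfl⟩
  have hYT : ∀ j i, Y j i ∈ T i := by
    intro j
    induction j with
    | zero => intro i; rw [hY0]; exact hX i 0
    | succ j ih =>
      intro i
      rw [hYs]
      dsimp only
      split_ifs
      · exact ih i
      · exact hX i _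
  have hYX : ∀ j < d, ∀ i i', Y j i ≤ X i' (j + 1) := by
    intro j
    induction j with
    | zero => intro hj i i'; rw [hY0]; exact hmono i i' 0 hj
    | succ j ih =>
      intro hj i i'
      rw [hYs]
      dsimp only
      split_ifs
      · exact (ih (by omega) i i).trans (hmono i i' _ hj)
      · exact hmono i i' _ hj
  refine ⟨fun i => (Finset.range (d + 1)).image fun j => Y j i, fun i j => Y j i,
    fun j => am (Y j), ?_, ?_, ?_, ?_, ?_, ?_⟩
  · intro i x hx
    obtain ⟨j, -, rfl⟩ := Finset.mem_image.mp hx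
    exact hYT j i
  · intro i j hj
    exact Finset.mem_image_of_mem _ (Finset.mem_range.mpr (by omega))
  · intro i x hx
    obtain ⟨j, hj, rfl⟩ := Finset.mem_image.mp hx
    exact ⟨j, by have := Finset.mem_range.mp hj; omega, rfl⟩
  · intro i j _
    exact ham (Y j) i
  · intro j _
    simp [hYs]
  · intro i j hj
    rw [hYs]
    dsimp only
    split_ifs with h
    · rw [h]
    · exact hYX j hj _ _

/-- A nonzero real relation supported on a colourful system has all weights nonzero and of the same
sign. Each column `a · j` is divided by a number `z j`, chosen so that the normalised columns `j`
and `j + 1` agree at the shared point `X (c j) j`. Let `τ` be the largest absolute value of a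
normalised term. All terms of a sum other than that of `X i j` are at most `τ / C`, so the terms
at all `X i j` differ from one another by less than `τ`, while one of them equals `± τ`. -/
lemma same_sign {d m r : ℕ} (a : Fin m → ℕ → ℝ) (C : ℝ) (hC1 : 1 < C)
    (hC0 : (4 * d + 2) * (m : ℝ) < C)
    (hpos : ∀ x, ∀ j ≤ d, 0 < a x j)
    (hC : ∀ x x', x < x' → ∀ j < d, C * (a x' j * a x (j + 1)) < a x j * a x' (j + 1))
    (T : Fin r → Finset (Fin m)) (hdisj : ∀ i j, i ≠ j → Disjoint (T i) (T j))
    (X : Fin r → ℕ → Fin m) (c : ℕ → Fin r) (hsys : ColSys d T X c)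
    (lam : Fin m → ℝ) (hne : ∃ i, ∃ x ∈ T i, lam x ≠ 0)
    (ζ : ℕ → ℝ) (hζ : ∀ i, ∀ j ≤ d, ∑ x ∈ T i, lam x * a x j = ζ j) :
    ∃ s : ℝ, ∀ i, ∀ x ∈ T i, 0 < s * lam x := by
  classical
  have hinj : ∀ i i' x, x ∈ T i → x ∈ T i' → i = i' := fun i i' x h h' => by
    by_contra hn
    exact Finset.disjoint_left.mp (hdisj i i' hn) h h'
  obtain ⟨z, hz0, hzs⟩ : ∃ z : ℕ → ℝ, z 0 = 1 ∧
      ∀ j, z (j + 1) = z j * (a (X (c j) j) (j + 1) / a (X (c j) j) j) :=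
    ⟨fun j => Nat.rec 1 (fun j w => w * (a (X (c j) j) (j + 1) / a (X (c j) j) j)) j,
      rfl, fun j => rfl⟩
  have hz : ∀ j ≤ d, 0 < z j := by
    intro j
    induction j with
    | zero => intro _; rw [hz0]; exact one_pos
    | succ j ih =>
      intro hj
      rw [hzs]
      exact mul_pos (ih (by omega)) (div_pos (hpos _ _ hj) (hpos _ _ (by omega)))
  set b : Fin m → ℕ → ℝ := fun x j => a x j / z j with hb
  have hbpos : ∀ x, ∀ j ≤ d, 0 < b x j := fun x j hj => div_pos (hpos x j hj) (hz j hj)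
  have hbs : ∀ x, ∀ j < d, b x (j + 1) =
      (a x (j + 1) * a (X (c j) j) j) / (z j * a (X (c j) j) (j + 1)) := by
    intro x j hj
    have p1 := hz j hj.le
    have p2 := hpos (X (c j) j) j hj.le
    have p3 := hpos (X (c j) j) (j + 1) hj
    simp only [hb, hzs]
    field_simp
  have hb1 : ∀ j < d, b (X (c j) j) (j + 1) = b (X (c j) j) j := by
    intro j hj
    have p1 := hz j hj.le
    have p2 := hpos (X (c j) j) j hj.le
    have p3 := hpos (X (c j) j) (j + 1) hj
    rw [hbs _ j hj]
    simp only [hb]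
    field_simp
  have hb2 : ∀ j < d, ∀ x, x < X (c j) j → C * b x (j + 1) ≤ b x j := by
    intro j hj x hx
    have p1 := hz j hj.le
    have p3 := hpos (X (c j) j) (j + 1) hj
    have h := hC _ _ hx j hj
    rw [hbs _ j hj, hb, ← mul_div_assoc, div_le_div_iff₀ (by positivity) p1]
    nlinarith
  have hb3 : ∀ j < d, ∀ x, X (c j) j < x → C * b x j ≤ b x (j + 1) := by
    intro j hj x hx
    have p1 := hz j hj.le
    have p3 := hpos (X (c j) j) (j + 1) hj
    have h := hC _ _ hx j hj
    rw [hbs _ j hj, hb, ← mul_div_assoc, div_le_div_iff₀ p1 (by positivity)]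
    nlinarith
  -- outside the dominant position `X i j`, a neighbouring column is larger by the factor `C`
  have hsmall : ∀ i, ∀ j ≤ d, ∀ x ∈ T i, x ≠ X i j → ∃ j' ≤ d, C * b x j ≤ b x j' := by
    intro i j hj x hx hxne
    obtain ⟨j', hj', rfl⟩ := hsys.cover i x hx
    rcases lt_trichotomy j' j with h | h | h
    · obtain ⟨k, rfl⟩ : ∃ k, j = k + 1 := ⟨j - 1, by omega⟩
      refine ⟨k, by omega, hb2 k (by omega) _ (lt_of_le_of_ne ?_ ?_)⟩
      · rw [← hsys.share k (by omega)]
        exact hsys.mono _ _ h hj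
      · intro heq
        have : c k = i := hinj _ _ _ (hsys.mem (c k) k (by omega)) (heq ▸ hx)
        rw [← hsys.share k (by omega), this] at heq
        exact hxne heq
    · exact absurd (by rw [h]) hxne
    · refine ⟨j + 1, by omega, hb3 j (by omega) _ (lt_of_le_of_ne (hsys.mono _ _ h hj') ?_)⟩
      intro heq
      have : c j = i := hinj _ _ _ (hsys.mem (c j) j (by omega)) (heq ▸ hx)
      rw [this] at heq
      exact hxne heq.symm
  -- the largest normalised coefficient
  obtain ⟨i₀, x₀, hx₀, hlx₀⟩ := hne
  obtain ⟨⟨x1, j1⟩, hmem1, hmax1⟩ := Finset.exists_max_image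
    ((Finset.univ.biUnion T) ×ˢ Finset.range (d + 1)) (fun q => |lam q.1| * b q.1 q.2)
    ⟨(x₀, 0), by simp; exact ⟨i₀, hx₀⟩⟩
  simp only [Finset.mem_product, Finset.mem_biUnion, Finset.mem_univ, true_and,
    Finset.mem_range, Prod.forall, and_imp, forall_exists_index] at hmem1 hmax1
  obtain ⟨⟨i1, hx1⟩, hj1⟩ := hmem1
  set τ := |lam x1| * b x1 j1 with hτ
  have hτ0 : 0 < τ := lt_of_lt_of_le (mul_pos (abs_pos.mpr hlx₀) (hbpos x₀ 0 (by omega)))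
    (hmax1 x₀ 0 i₀ hx₀ (by omega))
  have hx1j : x1 = X i1 j1 := by
    by_contra hcon
    obtain ⟨j', hj', hle⟩ := hsmall i1 j1 (by omega) x1 hx1 hcon
    have h := hmax1 x1 j' i1 hx1 (by omega)
    have h2 := mul_le_mul_of_nonneg_left hle (abs_nonneg (lam x1))
    nlinarith
  have hterm : ∀ i, ∀ j ≤ d, ∀ x ∈ T i, x ≠ X i j → |lam x * b x j| ≤ τ / C := by
    intro i j hj x hx hxne
    obtain ⟨j', hj', hle⟩ := hsmall i j hj x hx hxne
    have h := hmax1 x j' i hx (by omega)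
    have h2 := mul_le_mul_of_nonneg_left hle (abs_nonneg (lam x))
    rw [abs_mul, abs_of_pos (hbpos x j hj), le_div_iff₀ (by linarith)]
    linarith
  set u : Fin r → ℕ → ℝ := fun i j => lam (X i j) * b (X i j) j with hu
  set δ := (m : ℝ) * (τ / C) with hδ
  have hδτ : (4 * d + 2) * δ < τ := by
    have : (4 * d + 2) * δ = ((4 * d + 2) * m) * τ / C := by rw [hδ]; ring
    rw [this, div_lt_iff₀ (by linarith)]
    nlinarith
  have hδ0 : 0 ≤ δ := by have : 0 < C := by linarith
                         positivity
  -- each sum equals its dominant term up to `δ`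
  have hη : ∀ i, ∀ j ≤ d, |u i j - ζ j / z j| ≤ δ := by
    intro i j hj
    have e : ζ j / z j = ∑ x ∈ T i, lam x * b x j := by
      rw [← hζ i j hj, Finset.sum_div]
      exact Finset.sum_congr rfl fun x _ => by simp only [hb]; ring
    rw [e, ← Finset.add_sum_erase _ _ (hsys.mem i j hj), abs_sub_comm]
    simp only [hu, add_sub_cancel_left]
    calc _ ≤ ∑ x ∈ (T i).erase (X i j), |lam x * b x j| := Finset.abs_sum_le_sum_abs _ _
      _ ≤ ((T i).erase (X i j)).card • (τ / C) := by
        apply Finset.sum_le_card_nsmul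
        intro x hx
        rw [Finset.mem_erase] at hx
        exact hterm i j hj x hx.2 hx.1
      _ = (((T i).erase (X i j)).card : ℝ) * (τ / C) := nsmul_eq_mul _ _
      _ ≤ δ := by
        have : 0 < C := by linarith
        rw [hδ]
        gcongr
        simpa using Finset.card_le_univ ((T i).erase (X i j))
  -- for `i = c j` the dominant terms of the columns `j` and `j + 1` coincide
  have hstep : ∀ j < d, |ζ (j + 1) / z (j + 1) - ζ j / z j| ≤ 2 * δ := by
    intro j hj
    have h1 := hη (c j) j hj.le
    have h2 := hη (c j) (j + 1) hj
    have e : u (c j) (j + 1) = u (c j) j := by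
      simp only [hu]
      rw [hsys.share j hj, hb1 j hj]
    rw [e] at h2
    rw [abs_le] at *
    constructor <;> linarith
  have hchain : ∀ j ≤ d, |ζ j / z j - ζ 0 / z 0| ≤ 2 * d * δ := by
    have : ∀ j ≤ d, |ζ j / z j - ζ 0 / z 0| ≤ 2 * j * δ := by
      intro j
      induction j with
      | zero => intro _; simp
      | succ j ih =>
        intro hj
        have h1 := ih (by omega)
        have h2 := hstep j (by omega)
        push_cast
        rw [abs_le] at *
        constructor <;> linarith
    intro j hj
    refine (this j hj).trans ?_
    have : (j : ℝ) ≤ d := by exact_mod_cast hj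
    gcongr
  refine ⟨u i1 j1, fun i x hx => ?_⟩
  obtain ⟨j, hj, rfl⟩ := hsys.cover i x hx
  have hlt : |u i j - u i1 j1| < |u i1 j1| := by
    have e : |u i1 j1| = τ := by
      simp only [hu, hτ]
      rw [← hx1j, abs_mul, abs_of_pos (hbpos x1 j1 (by omega))]
    rw [e]
    refine lt_of_le_of_lt ?_ hδτ
    have h1 := hη i j hj
    have h2 := hη i1 j1 (by omega)
    have h3 := hchain j hj
    have h4 := hchain j1 (by omega)
    rw [abs_le] at *
    constructor <;> linarith
  have hprod : 0 < u i1 j1 * u i j := by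
    rcases abs_cases (u i1 j1) with ⟨h, h'⟩ | ⟨h, h'⟩ <;> rw [h, abs_lt] at hlt <;> nlinarith
  have hbp := hbpos (X i j) j hj
  have e : u i1 j1 * u i j = (u i1 j1 * lam (X i j)) * b (X i j) j := by
    simp only [hu]; ring
  rw [e] at hprod
  exact pos_of_mul_pos_left hprod hbp.le

/-! ### Colourful words -/

/-- The associated word of disjoint sets is the increasing enumeration of their union, with every
point replaced by the index of its set. -/
lemma assocWord_eq_map {m r : ℕ} (hr : 0 < r) (T : Fin r → Finset (Fin m))
    (hdisj : ∀ i j, i ≠ j → Disjoint (T i) (T j)) :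
    ∃ col : Fin m → Fin r, (∀ i, ∀ x ∈ T i, col x = i) ∧
      assocWord T = ((Finset.univ.biUnion T).sort).map col := by
  classical
  refine ⟨fun k => if h : ∃ i, k ∈ T i then h.choose else ⟨0, hr⟩, ?_, ?_⟩
  · intro i x hx
    have h : ∃ i, x ∈ T i := ⟨i, hx⟩
    dsimp only
    rw [dif_pos h]
    by_contra hn
    exact Finset.disjoint_left.mp (hdisj _ _ hn) h.choose_spec hx
  · have hs : (Finset.univ.biUnion T).sort =
        (List.finRange m).filter (fun k => decide (∃ i, k ∈ T i)) := by
      refine List.SortedLT.eq_of_mem_iff (Finset.sortedLT_sort _) ?_ ?_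
      · exact (List.sortedLT_finRange m).pairwise.filter _ |>.sortedLT
      · intro a; simp
    rw [hs, assocWord]
    generalize List.finRange m = l
    induction l with
    | nil => rfl
    | cons a l ih =>
      by_cases h : ∃ i, a ∈ T i
      · rw [List.filterMap_cons_some (b := h.choose) (by rw [dif_pos h]), List.filter_cons_of_pos
          (by simpa using h), List.map_cons, ih, dif_pos h]
      · rw [List.filterMap_cons_none (by rw [dif_neg h]), List.filter_cons_of_neg
          (by simpa using h), ih]

lemma length_assocWord {m r : ℕ} (hr : 0 < r) (T : Fin r → Finset (Fin m))
    (hdisj : ∀ i j, i ≠ j → Disjoint (T i) (T j)) :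
    (assocWord T).length = (Finset.univ.biUnion T).card := by
  obtain ⟨col, -, h⟩ := assocWord_eq_map hr T hdisj
  rw [h, List.length_map, Finset.length_sort]

lemma IsColorfulWord.card_biUnion {d m r : ℕ} (hr : 2 ≤ r) {T : Fin r → Finset (Fin m)}
    (hdisj : ∀ i j, i ≠ j → Disjoint (T i) (T j))
    (h : IsColorfulWord d (Finset.univ : Finset (Fin r)) (assocWord T)) :
    (Finset.univ.biUnion T).card = (d + 1) * (r - 1) + 1 := by
  rw [← length_assocWord (by omega) T hdisj, h.1, Finset.card_univ, Fintype.card_fin,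
    Nat.min_eq_right (by omega)]

/-- In a colourful word, `X i j` is the point at which the letter `i` occurs in the `j`-th block.
A block has `r` positions, so each of them carries one of these occurrences, and the endpoint
shared by two consecutive blocks is an occurrence of the same letter `c j` in both. -/
lemma IsColorfulWord.exists_colSys {d m r : ℕ} (hr : 2 ≤ r) {T : Fin r → Finset (Fin m)}
    (hdisj : ∀ i j, i ≠ j → Disjoint (T i) (T j))
    (h : IsColorfulWord d (Finset.univ : Finset (Fin r)) (assocWord T)) :
    ∃ X c, ColSys d T X c := by
  obtain ⟨col, hcol, hW⟩ := assocWord_eq_map (by omega) T hdisj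
  have hcard := h.card_biUnion hr hdisj
  obtain ⟨n, rfl⟩ : ∃ n, r = n + 1 := ⟨r - 1, by omega⟩
  have h2 := h.2
  rw [hW] at h2
  simp only [Finset.card_univ, Fintype.card_fin, Nat.add_sub_cancel, Finset.mem_univ,
    forall_true_left] at h2 hcard
  set U := Finset.univ.biUnion T with hU
  set N := (d + 1) * n + 1 with hN
  let e := U.orderEmbOfFin hcard
  have hN0 : 0 < N := by omega
  -- the point in position `k`, with a junk value for `k ≥ N`
  let ℓ : ℕ → Fin m := fun k => if hk : k < N then e ⟨k, hk⟩ else e ⟨N - 1, by omega⟩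
  have hℓ : ∀ k (hk : k < N), ℓ k = e ⟨k, hk⟩ := fun k hk => dif_pos hk
  have hℓmono : ∀ k k', k ≤ k' → k' < N → ℓ k ≤ ℓ k' := by
    intro k k' hk hk'
    rw [hℓ k (by omega), hℓ k' hk']
    exact e.monotone (by simpa using hk)
  have hℓmem : ∀ k, k < N → ℓ k ∈ T (col (ℓ k)) := by
    intro k hk
    have : ℓ k ∈ U := by rw [hℓ k hk]; exact Finset.orderEmbOfFin_mem U hcard _
    rw [hU, Finset.mem_biUnion] at this
    obtain ⟨i, -, hi⟩ := this
    rwa [hcol i _ hi]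
  have hget : ∀ k (hk : k < (U.sort.map col).length), (U.sort.map col)[k] = col (ℓ k) := by
    intro k hk
    have hk' : k < N := by simpa [hcard] using hk
    rw [hℓ k hk', Finset.orderEmbOfFin_apply]
    simp
  have hjn : ∀ j ≤ d, (j + 1) * n < N := fun j hj => by
    have : (j + 1) * n ≤ (d + 1) * n := Nat.mul_le_mul_right _ (by omega)
    omega
  have hK : ∀ i j, ∃ k, j ≤ d → j * n ≤ k ∧ k ≤ (j + 1) * n ∧ col (ℓ k) = i := by
    intro i j
    by_cases hj : j ≤ d
    · have h3 : i ∈ ((U.sort.map col).drop (j * n)).take (n + 1) := by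
        rw [← List.count_pos_iff, h2 j hj i]
        exact one_pos
      obtain ⟨q, hq, hqi⟩ := List.mem_iff_getElem.mp h3
      rw [List.getElem_take, List.getElem_drop, hget] at hqi
      rw [List.length_take] at hq
      refine ⟨j * n + q, fun _ => ⟨by omega, ?_, hqi⟩⟩
      rw [add_mul]
      omega
    · exact ⟨0, fun h => absurd h hj⟩
  choose K hK using hK
  have hsurj : ∀ j ≤ d, ∀ k, j * n ≤ k → k ≤ (j + 1) * n → ∃ i, K i j = k := by
    intro j hj k hk hk'
    have hinj : Function.Injective fun i => K i j := fun i i' heq => by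
      rw [← (hK i j hj).2.2, ← (hK i' j hj).2.2]
      simp only at heq
      rw [heq]
    have himg : Finset.univ.image (fun i => K i j) = Finset.Icc (j * n) ((j + 1) * n) := by
      apply Finset.eq_of_subset_of_card_le
      · intro y hy
        obtain ⟨i, -, rfl⟩ := Finset.mem_image.mp hy
        exact Finset.mem_Icc.mpr ⟨(hK i j hj).1, (hK i j hj).2.1⟩
      · rw [Finset.card_image_of_injective _ hinj, Nat.card_Icc, Finset.card_univ,
          Fintype.card_fin, add_mul]
        omega
    have : k ∈ Finset.univ.image (fun i => K i j) := by
      rw [himg]; exact Finset.mem_Icc.mpr ⟨hk, hk'⟩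
    obtain ⟨i, -, hi⟩ := Finset.mem_image.mp this
    exact ⟨i, hi⟩
  have hc : ∀ j, ∃ c, j ≤ d → K c j = (j + 1) * n := fun j => by
    by_cases hj : j ≤ d
    · obtain ⟨i, hi⟩ := hsurj j hj ((j + 1) * n) (Nat.mul_le_mul_right _ (by omega)) le_rfl
      exact ⟨i, fun _ => hi⟩
    · exact ⟨0, fun h => absurd h hj⟩
  choose c hc using hc
  have hKN : ∀ i, ∀ j ≤ d, K i j < N := fun i j hj =>
    lt_of_le_of_lt (hK i j hj).2.1 (hjn j hj)
  refine ⟨fun i j => ℓ (K i j), c, ?_, ?_, ?_, ?_, ?_⟩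
  · intro i j hj
    have := hℓmem _ (hKN i j hj)
    rwa [(hK i j hj).2.2] at this
  · intro i x hx
    have hxU : x ∈ Set.range e := by
      rw [Finset.range_orderEmbOfFin]
      exact Finset.mem_coe.mpr (Finset.mem_biUnion.mpr ⟨i, Finset.mem_univ _, hx⟩)
    obtain ⟨⟨k, hk⟩, hkx⟩ := hxU
    rw [← hℓ k hk] at hkx
    obtain ⟨j, hj, h4, h5⟩ : ∃ j ≤ d, j * n ≤ k ∧ k ≤ (j + 1) * n := by
      by_cases hkd : k < (d + 1) * n
      · have hn0 : 0 < n := by omega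
        refine ⟨k / n, ?_, Nat.div_mul_le_self k n, ?_⟩
        · have := (Nat.div_lt_iff_lt_mul hn0).mpr hkd
          omega
        · exact (Nat.lt_mul_of_div_lt (Nat.lt_succ_self _) hn0).le.trans
            (by rw [mul_comm])
      · refine ⟨d, le_rfl, ?_, by omega⟩
        rw [add_mul] at hkd
        omega
    obtain ⟨i', hi'⟩ := hsurj j hj k h4 h5
    have : i' = i := by
      rw [← (hK i' j hj).2.2, hi', hkx, hcol i x hx]
    exact ⟨j, hj, by rw [← this, hi', hkx]⟩
  · intro i j hj
    refine hℓmono _ _ ?_ (hKN _ _ hj)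
    rw [hc j hj]
    exact (hK i j hj).2.1
  · intro j hj
    obtain ⟨i', hi'⟩ := hsurj (j + 1) hj ((j + 1) * n) le_rfl
      (Nat.mul_le_mul_right _ (by omega))
    have : i' = c j := by
      rw [← (hK i' (j + 1) hj).2.2, ← (hK (c j) j hj.le).2.2, hi', hc j hj.le]
    rw [← this, hi', this, hc j hj.le]
  · intro i j hj
    refine hℓmono _ _ ?_ (hKN _ _ hj)
    rw [hc j hj.le]
    exact (hK i (j + 1) hj).1

/-- For a colourful system, the sorted union is the concatenation of the `j (r-1)` points preceding the
block `S j`, of the block itself, and of the later points. Hence the `j`-th block of the word reads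
off the `r` distinct letters of `S j`. -/
lemma ColSys.isColorfulWord {d m r : ℕ} (hr : 2 ≤ r) {T : Fin r → Finset (Fin m)}
    (hdisj : ∀ i j, i ≠ j → Disjoint (T i) (T j)) {X : Fin r → ℕ → Fin m} {c : ℕ → Fin r}
    (hsys : ColSys d T X c) :
    IsColorfulWord d (Finset.univ : Finset (Fin r)) (assocWord T) := by
  classical
  obtain ⟨col, hcol, hW⟩ := assocWord_eq_map (by omega) T hdisj
  set U := Finset.univ.biUnion T with hU
  set S : ℕ → Finset (Fin m) := fun j => Finset.univ.image fun i => X i j with hS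
  set V : ℕ → Finset (Fin m) := fun j => (Finset.range j).biUnion S with hV
  have memS : ∀ j x, x ∈ S j ↔ ∃ i, X i j = x := by simp [hS]
  have memV : ∀ j x, x ∈ V j ↔ ∃ j' < j, ∃ i, X i j' = x := by simp [hV, hS]
  have hUV : U = V (d + 1) := by
    ext x
    rw [memV, hU, Finset.mem_biUnion]
    constructor
    · rintro ⟨i, -, hx⟩
      obtain ⟨j, hj, rfl⟩ := hsys.cover i x hx
      exact ⟨j, by omega, i, rfl⟩
    · rintro ⟨j, hj, i, rfl⟩
      exact ⟨i, Finset.mem_univ _, hsys.mem i j (by omega)⟩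
  have hcolX : ∀ i, ∀ j ≤ d, col (X i j) = i := fun i j hj => hcol i _ (hsys.mem i j hj)
  have hScard : ∀ j ≤ d, (S j).card = r := by
    intro j hj
    rw [hS, Finset.card_image_of_injective, Finset.card_univ, Fintype.card_fin]
    intro i i' h
    simp only at h
    rw [← hcolX i j hj, h, hcolX i' j hj]
  have hVs : ∀ j, V (j + 1) = V j \ S j ∪ S j := by
    intro j
    rw [Finset.sdiff_union_self_eq_union, hV]
    simp only
    rw [Finset.range_add_one, Finset.biUnion_insert, Finset.union_comm]
  have hVcard : ∀ j ≤ d, (V (j + 1)).card = (V j \ S j).card + r := by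
    intro j hj
    rw [hVs, Finset.card_union_of_disjoint Finset.sdiff_disjoint, hScard j hj]
  have hinter : ∀ j < d, V (j + 1) ∩ S (j + 1) = {X (c j) j} := by
    intro j hj
    ext x
    rw [Finset.mem_inter, memV, memS, Finset.mem_singleton]
    constructor
    · rintro ⟨⟨j', hj', i, rfl⟩, i', hi'⟩
      refine le_antisymm ?_ ?_
      · rcases Nat.lt_succ_iff_lt_or_eq.mp hj' with h | rfl
        · exact hsys.mono _ _ h hj.le
        · exact hsys.top i j' hj.le
      · rw [← hi']
        exact hsys.bot i' j hj
    · rintro rfl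
      exact ⟨⟨j, by omega, c j, rfl⟩, c j, hsys.share j hj⟩
  -- consecutive blocks meet in one point, so each block adds `r - 1` points
  have hAcard : ∀ j ≤ d, (V j \ S j).card = j * (r - 1) := by
    intro j
    induction j with
    | zero => intro _; simp [hV]
    | succ j ih =>
      intro hj
      have h1 := Finset.card_sdiff_add_card_inter (V (j + 1)) (S (j + 1))
      rw [hinter j hj, Finset.card_singleton, hVcard j (by omega), ih (by omega)] at h1
      rw [add_mul]
      omega
  have hUcard : U.card = (d + 1) * (r - 1) + 1 := by
    rw [hUV, hVcard d le_rfl, hAcard d le_rfl, add_mul]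
    omega
  have hsplit : ∀ j ≤ d, U.sort = (V j \ S j).sort ++ ((S j).sort ++ (U \ V (j + 1)).sort) := by
    intro j hj
    refine List.SortedLT.eq_of_mem_iff (Finset.sortedLT_sort _) ?_ ?_
    · refine List.Pairwise.sortedLT ?_
      have hAS : ∀ x ∈ V j \ S j, ∀ y ∈ S j, x < y := by
        intro x hx y hy
        rw [Finset.mem_sdiff, memV] at hx
        obtain ⟨⟨j', hj', i, rfl⟩, hx⟩ := hx
        refine lt_of_le_of_ne ?_ fun h => hx (h ▸ hy)
        obtain ⟨i', rfl⟩ := (memS j y).mp hy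
        exact hsys.mono _ _ hj' hj
      have hSB : ∀ x, x ∈ V (j + 1) → ∀ y ∈ U \ V (j + 1), x < y := by
        intro x hx y hy
        rw [Finset.mem_sdiff, hUV, memV] at hy
        obtain ⟨⟨j', hj', i, rfl⟩, hy⟩ := hy
        refine lt_of_le_of_ne ?_ fun h => hy (h ▸ hx)
        obtain ⟨j'', hj'', i', rfl⟩ := (memV _ x).mp hx
        have : ¬ j' < j + 1 := fun h => hy ((memV _ _).mpr ⟨j', h, i, rfl⟩)
        exact hsys.mono _ _ (by omega) (by omega)
      rw [List.pairwise_append, List.pairwise_append]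
      refine ⟨(Finset.sortedLT_sort _).pairwise, ⟨(Finset.sortedLT_sort _).pairwise,
        (Finset.sortedLT_sort _).pairwise, ?_⟩, ?_⟩
      · intro x hx y hy
        rw [Finset.mem_sort] at hx hy
        refine hSB x ?_ y hy
        rw [hVs]
        exact Finset.mem_union_right _ hx
      · intro x hx y hy
        rw [Finset.mem_sort] at hx
        rw [List.mem_append, Finset.mem_sort, Finset.mem_sort] at hy
        rcases hy with hy | hy
        · exact hAS x hx y hy
        · refine hSB x ?_ y hy
          rw [hVs]
          exact Finset.mem_union_left _ hx
    · intro x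
      have hsub : V (j + 1) ⊆ U := by
        rw [hUV]
        exact Finset.biUnion_subset_biUnion_of_subset_left _
          (Finset.range_subset_range.mpr (by omega))
      have h1 : x ∈ V (j + 1) ↔ x ∈ V j \ S j ∨ x ∈ S j := by rw [hVs, Finset.mem_union]
      have h2 := @hsub x
      simp only [List.mem_append, Finset.mem_sort, Finset.mem_sdiff (s := U)]
      tauto
  refine ⟨?_, fun j hj i _ => ?_⟩
  · rw [hW, List.length_map, Finset.length_sort, hUcard, Finset.card_univ, Fintype.card_fin,
      Nat.min_eq_right (by omega)]
  · rw [hW, Finset.card_univ, Fintype.card_fin, hsplit j hj, List.map_append, List.map_append,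
      List.drop_left' (by rw [List.length_map, Finset.length_sort, hAcard j hj]),
      List.take_left' (by rw [List.length_map, Finset.length_sort, hScard j hj])]
    apply List.count_eq_one_of_mem
    · refine List.Nodup.map_on ?_ (Finset.sort_nodup _ _)
      intro x hx y hy hxy
      rw [Finset.mem_sort, memS] at hx hy
      obtain ⟨i, rfl⟩ := hx
      obtain ⟨i', rfl⟩ := hy
      rw [hcolX i j hj, hcolX i' j hj] at hxy
      rw [hxy]
    · rw [List.mem_map]
      exact ⟨X i j, (Finset.mem_sort _).mpr ((memS j _).mpr ⟨i, rfl⟩), hcolX i j hj⟩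

/-! ### Tverberg partitions -/

/-- The lift of a point of `ℝ^d` to height `1` in `ℝ^(d+1)`: affine relations between points
become linear relations between their lifts. -/
def liftPt {d : ℕ} (p : Pt d) : Fin (d + 1) → ℝ := Fin.cons 1 p

/-- A linear dependence among the lifts of `d + 1` points would be an affine dependence of the points,
the weights summing to zero by the coordinate `0`. -/
lemma GenPos.det_ne_zero {d N : ℕ} {p : Fin N → Pt d} (hp : Function.Injective p)
    (hgen : GenPos (Finset.image p Finset.univ)) (t : Fin (d + 1) → Fin N)
    (ht : Function.Injective t) :
    Matrix.det (Matrix.of fun k => liftPt (p (t k))) ≠ 0 := by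
  classical
  intro h0
  obtain ⟨w, hw, hw0⟩ := Matrix.exists_vecMul_eq_zero_iff.mpr h0
  have hpt : Function.Injective fun k => p (t k) := hp.comp ht
  have haff : AffineIndependent ℝ fun k => p (t k) := by
    have h1 := hgen (Finset.univ.image fun k => p (t k)) (by
      intro x hx
      obtain ⟨k, -, rfl⟩ := Finset.mem_image.mp hx
      exact Finset.mem_image_of_mem _ (Finset.mem_univ _)) (by
        rw [Finset.card_image_of_injective _ hpt]; simp)
    let e : Fin (d + 1) ↪ ((Finset.univ.image fun k => p (t k) : Finset (Pt d)) : Set (Pt d)) :=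
      ⟨fun k => ⟨p (t k), by simp⟩, fun k k' h => hpt (congrArg Subtype.val h)⟩
    exact h1.comp_embedding e
  rw [affineIndependent_iff] at haff
  have hcol : ∀ c : Fin (d + 1), ∑ k, w k * liftPt (p (t k)) c = 0 := fun c => by
    have := congrFun hw0 c
    simpa [Matrix.vecMul, dotProduct] using this
  have hz := haff Finset.univ w (by simpa [liftPt] using hcol 0) (by
    ext c
    simpa [liftPt] using hcol c.succ)
  exact hw (funext fun k => hz k (Finset.mem_univ k))

/-- Along a sequence with rapidly growing ratios `F (j+1) / F j`, every Tverberg partition contains a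
colourful system. -/
lemma TvPt.exists_colSys {d m r : ℕ} (hr : 2 ≤ r) {p : Fin m → Pt d}
    (hp : Function.Injective p) (F : ℕ → (Fin (d + 1) → ℝ) →ₗ[ℝ] ℝ) (C : ℝ)
    (hC0 : (m : ℝ) ^ 2 < C) (hpos : ∀ x, ∀ j ≤ d, 0 < F j (liftPt (p x)))
    (hC : ∀ x x', x < x' → ∀ j < d, C * (F j (liftPt (p x')) * F (j + 1) (liftPt (p x))) <
      F j (liftPt (p x)) * F (j + 1) (liftPt (p x')))
    {T : Fin r → Finset (Fin m)} (hT : TvPt p T) :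
    ∃ T' X c, (∀ i, T' i ⊆ T i) ∧ ColSys d T' X c := by
  classical
  obtain ⟨y, hy⟩ := hT
  rw [Set.mem_iInter] at hy
  have hw : ∀ i, ∃ w : Pt d → ℝ, (∀ x ∈ T i, 0 ≤ w (p x)) ∧ ∑ x ∈ T i, w (p x) = 1 ∧
      ∑ x ∈ T i, w (p x) • p x = y := by
    intro i
    have h := hy i
    rw [← Finset.coe_image, Finset.mem_convexHull'] at h
    obtain ⟨w, h0, h1, h2⟩ := h
    rw [Finset.sum_image fun a _ b _ h => hp h] at h1 h2
    exact ⟨w, fun x hx => h0 _ (Finset.mem_image_of_mem _ hx), h1, h2⟩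
  choose w h0 h1 h2 using hw
  obtain ⟨X, hX, hmono⟩ := exists_chain_of_common (fun x j => F j (liftPt (p x))) C hC0 hpos hC T
    (fun i x => w i (p x)) h0 h1 (fun j => F j (liftPt y)) (by
      intro i j _
      have : liftPt y = ∑ x ∈ T i, w i (p x) • liftPt (p x) := by
        ext c
        refine Fin.cases ?_ (fun c => ?_) c
        · simpa [liftPt] using (h1 i).symm
        · have := congrFun (h2 i) c
          simpa [liftPt] using this.symm
      rw [this, map_sum]
      simp)
  exact _root_.exists_colSys hr T X hX hmono

/-- Along a sequence with rapidly growing ratios `F (j+1) / F j`, every collection with a colourful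
system is a Tverberg partition. The coordinate `0` of the lifts shows that all parts have the same
total weight, by which the weights are normalised. -/
lemma ColSys.tvPt {d m r : ℕ} (hr : 2 ≤ r) {p : Fin m → Pt d}
    (F : ℕ → (Fin (d + 1) → ℝ) →ₗ[ℝ] ℝ) (C : ℝ) (hC1 : 1 < C)
    (hC0 : (4 * d + 2) * (m : ℝ) < C) (hpos : ∀ x, ∀ j ≤ d, 0 < F j (liftPt (p x)))
    (hC : ∀ x x', x < x' → ∀ j < d, C * (F j (liftPt (p x')) * F (j + 1) (liftPt (p x))) <
      F j (liftPt (p x)) * F (j + 1) (liftPt (p x')))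
    {T : Fin r → Finset (Fin m)} (hdisj : ∀ i j, i ≠ j → Disjoint (T i) (T j))
    {X : Fin r → ℕ → Fin m} {c : ℕ → Fin r} (hsys : ColSys d T X c)
    (hcard : (Finset.univ.biUnion T).card = (d + 1) * (r - 1) + 1) : TvPt p T := by
  classical
  set U := Finset.univ.biUnion T with hU
  let i₀ : Fin r := ⟨0, by omega⟩
  let v : Fin m → Fin (d + 1) → ℝ := fun x => liftPt (p x)
  have hTU : ∀ i, U ∩ T i = T i := fun i =>
    Finset.inter_eq_right.mpr (Finset.subset_biUnion_of_mem T (Finset.mem_univ i))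
  -- a nontrivial signed relation exists because there are more points than equations
  obtain ⟨lam, hne, Z, hZ⟩ : ∃ lam : Fin m → ℝ, (∃ i, ∃ x ∈ T i, lam x ≠ 0) ∧
      ∃ Z, ∀ i, ∑ x ∈ T i, lam x • v x = Z := by
    let w : U → ({i : Fin r // i ≠ i₀} → Fin (d + 1) → ℝ) := fun x i =>
      (if x.1 ∈ T i.1 then v x.1 else 0) - (if x.1 ∈ T i₀ then v x.1 else 0)
    have hdep : ¬ LinearIndependent ℝ w := by
      intro hli
      have h := hli.fintype_card_le_finrank
      rw [Fintype.card_coe, hcard, Module.finrank_pi_fintype] at h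
      simp only [Module.finrank_fintype_fun_eq_card, Fintype.card_fin, Finset.sum_const,
        Finset.card_univ, smul_eq_mul, Fintype.card_subtype_compl, Fintype.card_unique] at h
      rw [mul_comm] at h
      omega
    obtain ⟨g, hg, ⟨x₀, hx₀⟩, hgx⟩ := Fintype.not_linearIndependent_iff.mp hdep
    let lam : Fin m → ℝ := fun x => if h : x ∈ U then g ⟨x, h⟩ else 0
    have hlam : ∀ x : U, lam x.1 = g x := fun x => dif_pos x.2
    refine ⟨lam, ?_, ∑ x ∈ T i₀, lam x • v x, fun i => ?_⟩
    · obtain ⟨i, -, hi⟩ := Finset.mem_biUnion.mp hx₀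
      exact ⟨i, x₀, hi, by rwa [hlam ⟨x₀, hx₀⟩]⟩
    · by_cases hi : i = i₀
      · rw [hi]
      have h := congrFun hg ⟨i, hi⟩
      have h' : ∑ x ∈ U, lam x • ((if x ∈ T i then v x else 0) -
          (if x ∈ T i₀ then v x else 0)) = 0 := by
        rw [← Finset.sum_coe_sort U]
        simp only [hlam]
        simpa [w] using h
      simp only [smul_sub, Finset.sum_sub_distrib, smul_ite, smul_zero,
        Finset.sum_ite_mem, hTU] at h'
      exact sub_eq_zero.mp h'
  obtain ⟨s, hs⟩ := same_sign (fun x j => F j (v x)) C hC1 hC0 hpos hC T hdisj X c hsys lam hne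
    (fun j => F j Z) (fun i j _ => by rw [← hZ i, map_sum]; simp)
  have hcoord : ∀ i k, ∑ x ∈ T i, s * lam x * v x k = s * Z k := fun i k => by
    rw [← hZ i, Finset.sum_apply, Finset.mul_sum]
    simp [mul_assoc]
  have hsum : ∀ i, ∑ x ∈ T i, s * lam x = s * Z 0 := fun i => by
    rw [← hcoord i 0]
    simp [v, liftPt]
  have hσ : 0 < s * Z 0 := by
    rw [← hsum i₀]
    exact Finset.sum_pos (hs i₀) ⟨_, hsys.mem i₀ 0 (Nat.zero_le _)⟩
  refine ⟨fun k => (s * Z k.succ) / (s * Z 0), Set.mem_iInter.mpr fun i => ?_⟩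
  have hy : (fun k : Fin d => (s * Z k.succ) / (s * Z 0)) =
      ∑ x ∈ T i, (s * lam x / (s * Z 0)) • p x := by
    ext k
    rw [← hcoord i k.succ, Finset.sum_div, Finset.sum_apply]
    refine Finset.sum_congr rfl fun x _ => ?_
    simp [v, liftPt]
    ring
  rw [hy]
  refine (convex_convexHull ℝ _).sum_mem (fun x hx => (div_pos (hs i x hx) hσ).le) ?_
    (fun x hx => subset_convexHull ℝ _ ⟨x, hx, rfl⟩)
  rw [← Finset.sum_div, hsum, div_self hσ.ne']

lemma TvPt.mono {d m r : ℕ} {p : Fin m → Pt d} {T T' : Fin r → Finset (Fin m)}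
    (hT : TvPt p T) (hsub : ∀ i, T i ⊆ T' i) : TvPt p T' := by
  obtain ⟨y, hy⟩ := hT
  rw [Set.mem_iInter] at hy
  exact ⟨y, Set.mem_iInter.mpr fun i =>
    convexHull_mono (Set.image_mono (Finset.coe_subset.mpr (hsub i))) (hy i)⟩

theorem statement19 (d m r : ℕ) (hd : 1 ≤ d) (hm : 1 ≤ m) (hr : 2 ≤ r) :
    ∃ N : ℕ, ∀ p : Fin N → Pt d, Function.Injective p →
      GenPos (Finset.image p Finset.univ) →
      ∃ g : Fin m → Fin N, StrictMono g ∧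
        ∀ T : Fin r → Finset (Fin m), (∀ i j, i ≠ j → Disjoint (T i) (T j)) →
          (MinTv (p ∘ g) T ↔
            IsColorfulWord d (Finset.univ : Finset (Fin r)) (assocWord T)) := by
  classical
  set C : ℝ := (4 * d + 2) * (m : ℝ) + (m : ℝ) ^ 2 + 2 with hC
  have hC1 : 1 < C := by
    have : (0 : ℝ) ≤ (4 * d + 2) * (m : ℝ) + (m : ℝ) ^ 2 := by positivity
    linarith
  have hCA : (4 * d + 2) * (m : ℝ) < C := by
    have : (0 : ℝ) ≤ (m : ℝ) ^ 2 := by positivity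
    linarith
  have hCB : (m : ℝ) ^ 2 < C := by
    have : (0 : ℝ) ≤ (4 * d + 2) * (m : ℝ) := by positivity
    linarith
  obtain ⟨N, hN⟩ := vector_universality d m C hC1
  refine ⟨N, fun p hp hgen => ?_⟩
  obtain ⟨g, hg, F, hpos, hcr⟩ := hN
    (fun k => if h : k < N then liftPt (p ⟨k, h⟩) else 0) (by
      intro t ht htN
      have := hgen.det_ne_zero hp (fun k => ⟨t k, htN k⟩) (fun k k' h =>
        ht.injective (by simpa using h))
      simpa [htN] using this)
  simp only [Fin.is_lt, dite_true, Fin.eta] at hpos hcr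
  have hpg : Function.Injective (p ∘ g) := hp.comp hg.injective
  refine ⟨g, hg, fun T hdisj => ?_⟩
  have hdisj' : ∀ T' : Fin r → Finset (Fin m), (∀ i, T' i ⊆ T i) →
      ∀ i j, i ≠ j → Disjoint (T' i) (T' j) := fun T' hsub i j hij =>
    Finset.disjoint_of_subset_left (hsub i) (Finset.disjoint_of_subset_right (hsub j)
      (hdisj i j hij))
  constructor
  · rintro ⟨htv, hmin⟩
    obtain ⟨T', X, c, hsub, hsys⟩ := htv.exists_colSys hr hpg F C hCB hpos hcr
    have hw := hsys.isColorfulWord hr (hdisj' T' hsub)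
    have htv' : TvPt (p ∘ g) T' := hsys.tvPt hr F C hC1 hCA hpos hcr (hdisj' T' hsub)
      (hw.card_biUnion hr (hdisj' T' hsub))
    -- by minimality no point lies outside the colourful part
    have hTT : T' = T := by
      funext i
      refine (hsub i).antisymm fun x hx => ?_
      by_contra hxn
      refine hmin i x hx (htv'.mono fun j y hy => Finset.mem_erase.mpr ⟨?_, hsub j hy⟩)
      rintro rfl
      by_cases hij : j = i
      · exact hxn (hij ▸ hy)
      · exact Finset.disjoint_left.mp (hdisj j i hij) (hsub j hy) hx
    rwa [hTT] at hw
  · intro hw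
    have hcard := hw.card_biUnion hr hdisj
    obtain ⟨X, c, hsys⟩ := hw.exists_colSys hr hdisj
    refine ⟨hsys.tvPt hr F C hC1 hCA hpos hcr hdisj hcard, fun i x hx htv => ?_⟩
    obtain ⟨T', X', c', hsub, hsys'⟩ := htv.exists_colSys hr hpg F C hCB hpos hcr
    have hsub' : ∀ j, T' j ⊆ T j := fun j => (hsub j).trans (Finset.erase_subset _ _)
    have hcard' := (hsys'.isColorfulWord hr (hdisj' T' hsub')).card_biUnion hr (hdisj' T' hsub')
    have hlt : (Finset.univ.biUnion T').card < (Finset.univ.biUnion T).card := by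
      -- both words have the same length, yet the smaller collection misses the point `x`
      apply Finset.card_lt_card
      refine ⟨Finset.biUnion_mono fun j _ => hsub' j, fun hle => ?_⟩
      have := hle (Finset.mem_biUnion.mpr ⟨i, Finset.mem_univ _, hx⟩)
      obtain ⟨j, -, hj⟩ := Finset.mem_biUnion.mp this
      exact Finset.notMem_erase x _ (hsub j hj)
    omega
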